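/- arXiv:2306.15519 — 5 statements merged into one kernel-verified Lean document; each statement's English description precedes it below -/
import Mathlib

section
/- Let N be a positive integer, D a positive integer that is not a perfect square, and k a positive even integer. Then for every nonzero rational number x: ∑_{(a,b,c) ∈ ℤ³, b²−4ac=D, N∣a, a<0<c} (ax² + bx + c)^{k−1} = ∑_{(a,b,c) ∈ ℤ³, b²−4ac=D, N∣a, a<0, ax²+bx+c>0} (ax² + bx + c)^{k−1} − N^{k−1}·x^{2k−2}·∑_{(a,b,c) ∈ ℤ³, b²−4ac=D, N∣a, a<0, a/(N²x²) − b/(Nx) + c > 0} (a/(N²x²) − b/(Nx) + c)^{k−1}. (All three index sets are finite, so these are finite sums; the right-hand side is the weight 2−2k slash action of (id − W_N) at x, where W_N is the Fricke involution z ↦ −1/(Nz).) -/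
/-!
Write `Q(x) = a x² + b x + c` and let `S₁ = {a < 0 < c}`, `S₂ = {a < 0 < Q(x)}`, `T = {Q(x) < 0 < c}`
be sets of forms of discriminant `D` with `N ∣ a`.

* The involution `[a, b, c] ↦ [-N c, b, -a / N]` carries the index set of the Fricke-twisted sum onto
  `T`, and `N x² Q(-1 / (N x))` is the negative of the value at `x` of the image form. As `k - 1` is
  odd, the right-hand side is the sum of `Q(x)^(k-1)` over `S₂` plus that over `T`
  (`formsEquiv`, `fricke_value`).
* Let `h` be the function `(1_{S₂} + 1_T - 1_{S₁}) Q(x)^(k-1)` on forms. Since `D` is not a square,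
  `a` and `c` never vanish, so `h` lives on the forms with `a, c < 0 < Q(x)` or `Q(x) < 0 < a, c`.
  These are exchanged by `Q ↦ -Q`, and `Q(x)^(k-1)` is odd; thus `h` is odd and sums to zero.

All sums are finite: for `x = m / q`, the identity
`(2 a m + b q)² - 4 a (a m² + b m q + c q²) = D q²` bounds `a` and `b` once `a < 0 < Q(x)`, because
`q² Q(x)` is then a positive integer (`finite_forms`). Taking `x = 0` covers `S₁`, and taking
`-1 / (N x)` covers the Fricke-twisted sum.
-/

open Complex

/-- The value `Q(x, 1)` of the form `Q = [a, b, c]`, given as a triple. -/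
noncomputable def formVal (x : ℝ) (p : ℤ × ℤ × ℤ) : ℝ :=
  (p.1 : ℝ) * x ^ 2 + (p.2.1 : ℝ) * x + (p.2.2 : ℝ)

/-- Forms of discriminant `D` with leading coefficient divisible by `N`. -/
def IsForm (N D : ℕ) (p : ℤ × ℤ × ℤ) : Prop :=
  p.2.1 ^ 2 - 4 * p.1 * p.2.2 = (D : ℤ) ∧ (N : ℤ) ∣ p.1

lemma formVal_neg (x : ℝ) (p : ℤ × ℤ × ℤ) : formVal x (-p) = -formVal x p := by
  simp only [formVal, Prod.fst_neg, Prod.snd_neg, Int.cast_neg]; ring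

lemma isForm_neg {N D : ℕ} {p : ℤ × ℤ × ℤ} : IsForm N D (-p) ↔ IsForm N D p := by
  simp [IsForm]

lemma IsForm.ne_zero {N D : ℕ} (hDns : ¬ IsSquare D) {p : ℤ × ℤ × ℤ} (h : IsForm N D p) :
    p.1 ≠ 0 ∧ p.2.2 ≠ 0 := by
  have key : ¬ p.2.1 ^ 2 = (D : ℤ) := by
    intro h2
    refine hDns ⟨p.2.1.natAbs, ?_⟩
    zify
    rw [← h2, ← sq, sq_abs]
  constructor <;> intro h0 <;> apply key <;> have := h.1 <;> rw [h0] at this <;> simpa using this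

lemma finite_forms (D : ℕ) (x : ℚ) :
    {p : ℤ × ℤ × ℤ | p.2.1 ^ 2 - 4 * p.1 * p.2.2 = (D : ℤ) ∧ p.1 < 0 ∧
      0 < formVal x p}.Finite := by
  set m : ℤ := x.num with hm
  set q : ℤ := (x.den : ℤ) with hq
  have hq1 : 1 ≤ q := by have := x.den_pos; omega
  set A : ℤ := D * q ^ 2 with hA
  set B : ℤ := A + 2 * A * |m| with hB
  refine ((Set.finite_Icc (-A) A).prod ((Set.finite_Icc (-B) B).prod
    (Set.finite_Icc (-(B ^ 2 + D)) (B ^ 2 + D)))).subset ?_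
  rintro ⟨a, b, c⟩ ⟨h1, h2, h3⟩
  simp only [formVal] at h1 h2 h3
  have hn : 0 < a * m ^ 2 + b * m * q + c * q ^ 2 := by
    have hqR : (0 : ℝ) < (q : ℝ) := by exact_mod_cast (by omega : 0 < q)
    have hx : (x : ℝ) = (m : ℝ) / (q : ℝ) := by
      rw [hm, hq, Rat.cast_def]; simp
    have h4 : (0 : ℝ) < (a * (x : ℝ) ^ 2 + b * (x : ℝ) + c) * (q : ℝ) ^ 2 := by positivity
    rw [hx] at h4
    have h5 : ((a : ℝ) * ((m : ℝ) / q) ^ 2 + b * ((m : ℝ) / q) + c) * (q : ℝ) ^ 2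
        = a * m ^ 2 + b * m * q + c * q ^ 2 := by field_simp
    rw [h5] at h4
    exact_mod_cast h4
  set n := a * m ^ 2 + b * m * q + c * q ^ 2 with hnd
  have hid : (2 * a * m + b * q) ^ 2 - 4 * a * n = A := by
    rw [hA, ← h1, hnd]; ring
  have han : -a ≤ -a * n := by nlinarith
  have hsq := sq_nonneg (2 * a * m + b * q)
  have haA : -a ≤ A := by nlinarith
  have htA : |2 * a * m + b * q| ≤ A := by
    have h6 : |2 * a * m + b * q| ≤ (2 * a * m + b * q) ^ 2 := by
      rw [← sq_abs]; exact Int.le_self_sq _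
    nlinarith
  have hbB : |b| ≤ B := by
    have h7 : |b| ≤ |b * q| := by
      rw [abs_mul, abs_of_pos (by omega : 0 < q)]
      exact le_mul_of_one_le_right (abs_nonneg b) hq1
    have h8 : |b * q| ≤ |2 * a * m + b * q| + |2 * a * m| := by
      have := abs_sub (2 * a * m + b * q) (2 * a * m)
      simpa using this
    have h9 : |2 * a * m| ≤ 2 * A * |m| := by
      rw [abs_mul, abs_mul, abs_of_neg h2, abs_two]
      exact mul_le_mul_of_nonneg_right (by linarith) (abs_nonneg m)
    linarith
  have hcC : |c| ≤ B ^ 2 + D := by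
    have h10 : |c| ≤ |4 * a * c| := by
      rw [abs_mul]
      refine le_mul_of_one_le_left (abs_nonneg c) ?_
      rw [abs_of_neg (by linarith)]; linarith
    have h11 : 4 * a * c = b ^ 2 - D := by linarith
    have h12 : b ^ 2 ≤ B ^ 2 := by
      rw [← sq_abs b]; exact pow_le_pow_left₀ (abs_nonneg b) hbB 2
    have h13 : |b ^ 2 - (D : ℤ)| ≤ b ^ 2 + D := by
      rw [abs_le]; constructor <;> nlinarith [sq_nonneg b, Int.natCast_nonneg D]
    rw [h11] at h10
    linarith
  refine ⟨⟨by simp only; linarith, by simp only; linarith⟩, abs_le.mp hbB, abs_le.mp hcC⟩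

/-- The action of the Fricke involution on forms, up to sign: `[a, b, c] ↦ [-N c, b, -a / N]`. -/
def frickeForm (N : ℕ) (p : ℤ × ℤ × ℤ) : ℤ × ℤ × ℤ := (-(N * p.2.2), p.2.1, -(p.1 / N))

lemma frickeForm_isForm {N D : ℕ} (hN : 0 < N) {p : ℤ × ℤ × ℤ} (h : IsForm N D p) :
    IsForm N D (frickeForm N p) := by
  obtain ⟨a, b, c⟩ := p
  obtain ⟨h1, a', rfl⟩ := h
  have hN' : (N : ℤ) ≠ 0 := by exact_mod_cast hN.ne'
  refine ⟨?_, ?_⟩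
  · simp only [frickeForm, Int.mul_ediv_cancel_left _ hN'] at h1 ⊢
    linarith
  · simp [frickeForm]

lemma frickeForm_frickeForm {N D : ℕ} (hN : 0 < N) {p : ℤ × ℤ × ℤ} (h : IsForm N D p) :
    frickeForm N (frickeForm N p) = p := by
  obtain ⟨a, b, c⟩ := p
  obtain ⟨h1, a', rfl⟩ := h
  have hN' : (N : ℤ) ≠ 0 := by exact_mod_cast hN.ne'
  simp [frickeForm, Int.mul_ediv_cancel_left _ hN', ← mul_neg]

lemma fricke_value {N D : ℕ} (hN : 0 < N) {x : ℝ} (hx : x ≠ 0) {p : ℤ × ℤ × ℤ}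
    (h : IsForm N D p) :
    N * x ^ 2 * formVal (-1 / (N * x)) p = -formVal x (frickeForm N p) := by
  obtain ⟨a, b, c⟩ := p
  obtain ⟨h1, a', rfl⟩ := h
  have hN' : (N : ℤ) ≠ 0 := by exact_mod_cast hN.ne'
  have hNR : (N : ℝ) ≠ 0 := by exact_mod_cast hN.ne'
  simp only [frickeForm, formVal, Int.mul_ediv_cancel_left _ hN']
  push_cast
  field_simp
  ring

lemma frickeForm_pos_iff {N : ℕ} (hN : 0 < N) {D : ℕ} {p : ℤ × ℤ × ℤ} (h : IsForm N D p) :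
    0 < (frickeForm N p).2.2 ↔ p.1 < 0 := by
  obtain ⟨a, b, c⟩ := p
  obtain ⟨h1, a', rfl⟩ := h
  have hN' : (0 : ℤ) < N := by exact_mod_cast hN
  simp only [frickeForm, Int.mul_ediv_cancel_left _ hN'.ne']
  constructor <;> intro h <;> nlinarith

lemma formVal_fricke_pos_iff {N D : ℕ} (hN : 0 < N) {x : ℝ} (hx : x ≠ 0) {p : ℤ × ℤ × ℤ}
    (h : IsForm N D p) :
    0 < formVal (-1 / (N * x)) p ↔ formVal x (frickeForm N p) < 0 := by
  have h1 := fricke_value hN hx h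
  have h2 : (0 : ℝ) < N * x ^ 2 := by positivity
  rw [← mul_pos_iff_of_pos_left h2, h1, neg_pos]

/-- The Fricke involution as a bijection from the forms with `a < 0 < Q(-1 / (N x))` onto those
with `Q(x) < 0 < c`. -/
def formsEquiv (N D : ℕ) (hN : 0 < N) (x : ℝ) (hx : x ≠ 0) :
    {p : ℤ × ℤ × ℤ | IsForm N D p ∧ p.1 < 0 ∧ 0 < formVal (-1 / (N * x)) p} ≃
    {p : ℤ × ℤ × ℤ | IsForm N D p ∧ 0 < p.2.2 ∧ formVal x p < 0} where
  toFun p := ⟨frickeForm N p, frickeForm_isForm hN p.2.1,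
    (frickeForm_pos_iff hN p.2.1).2 p.2.2.1, (formVal_fricke_pos_iff hN hx p.2.1).1 p.2.2.2⟩
  invFun p := ⟨frickeForm N p, frickeForm_isForm hN p.2.1, by
      rw [← frickeForm_pos_iff hN (frickeForm_isForm hN p.2.1), frickeForm_frickeForm hN p.2.1]
      exact p.2.2.1, by
      rw [formVal_fricke_pos_iff hN hx (frickeForm_isForm hN p.2.1),
        frickeForm_frickeForm hN p.2.1]
      exact p.2.2.2⟩
  left_inv p := Subtype.ext (frickeForm_frickeForm hN p.2.1)
  right_inv p := Subtype.ext (frickeForm_frickeForm hN p.2.1)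

/-- The sum over `a < 0 < c` splits as the sum over `a < 0 < Q(x)` plus that over `Q(x) < 0 < c`. -/
lemma tsum_split (N D j : ℕ) (hDns : ¬ IsSquare D) (hj : Odd j) (x : ℝ)
    (f₁ : {p : ℤ × ℤ × ℤ | IsForm N D p ∧ p.1 < 0 ∧ 0 < p.2.2}.Finite)
    (f₂ : {p : ℤ × ℤ × ℤ | IsForm N D p ∧ p.1 < 0 ∧ 0 < formVal x p}.Finite)
    (f₃ : {p : ℤ × ℤ × ℤ | IsForm N D p ∧ 0 < p.2.2 ∧ formVal x p < 0}.Finite) :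
    ∑' p : {p : ℤ × ℤ × ℤ | IsForm N D p ∧ p.1 < 0 ∧ 0 < p.2.2}, formVal x p ^ j =
    ∑' p : {p : ℤ × ℤ × ℤ | IsForm N D p ∧ p.1 < 0 ∧ 0 < formVal x p}, formVal x p ^ j +
    ∑' p : {p : ℤ × ℤ × ℤ | IsForm N D p ∧ 0 < p.2.2 ∧ formVal x p < 0}, formVal x p ^ j := by
  set F : ℤ × ℤ × ℤ → ℝ := fun p => formVal x p ^ j with hF
  set S₁ := {p : ℤ × ℤ × ℤ | IsForm N D p ∧ p.1 < 0 ∧ 0 < p.2.2} with hS₁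
  set S₂ := {p : ℤ × ℤ × ℤ | IsForm N D p ∧ p.1 < 0 ∧ 0 < formVal x p} with hS₂
  set S₃ := {p : ℤ × ℤ × ℤ | IsForm N D p ∧ 0 < p.2.2 ∧ formVal x p < 0} with hS₃
  have key : ∀ S : Set (ℤ × ℤ × ℤ), S.Finite → Summable (S.indicator F) := fun S hS =>
    summable_of_hasFiniteSupport (hS.subset Set.support_indicator_subset)
  change ∑' p : S₁, F p = ∑' p : S₂, F p + ∑' p : S₃, F p
  rw [tsum_subtype S₁ F, tsum_subtype S₂ F, tsum_subtype S₃ F]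
  have hodd : ∀ p, S₂.indicator F (-p) + S₃.indicator F (-p) - S₁.indicator F (-p) =
      -(S₂.indicator F p + S₃.indicator F p - S₁.indicator F p) := by
    intro p
    have hFn : F (-p) = -F p := by simp only [hF, formVal_neg, hj.neg_pow]
    by_cases hp : IsForm N D p
    · obtain ⟨ha, hc⟩ := hp.ne_zero hDns
      have h0 : formVal x p = 0 → F p = 0 := fun h => by
        simp only [hF, h]; exact zero_pow hj.pos.ne'
      classical
      simp only [Set.indicator_apply, hS₁, hS₂, hS₃, Set.mem_ofPred_eq, isForm_neg, hp, true_and,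
        formVal_neg, Prod.fst_neg, Prod.snd_neg, hFn, neg_lt_zero, neg_pos]
      rcases lt_or_gt_of_ne ha with ha | ha <;> rcases lt_or_gt_of_ne hc with hc | hc <;>
        rcases lt_trichotomy (formVal x p) 0 with hv | hv | hv <;>
        simp [ha, hc, hv, ha.not_gt, hc.not_gt, not_lt_of_gt, h0]
    · simp [hS₁, hS₂, hS₃, isForm_neg, hp]
  have hz : ∑' p, (S₂.indicator F p + S₃.indicator F p - S₁.indicator F p) = 0 := by
    have h1 := (Equiv.neg (ℤ × ℤ × ℤ)).tsum_eq
      (fun p => S₂.indicator F p + S₃.indicator F p - S₁.indicator F p)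
    simp only [Equiv.neg_apply, hodd, tsum_neg] at h1
    linarith
  rw [((key _ f₂).add (key _ f₃)).tsum_sub (key _ f₁), (key _ f₂).tsum_add (key _ f₃)] at hz
  linarith

/-- For `N ≥ 1`, `D > 0` a non-square, `k` positive and even, and every nonzero
rational `x`, the sum of `Q(x,1)^(k-1)` over forms with `a < 0 < c` equals the sum
over forms with `a < 0 < Q(x,1)` minus its image under the weight `2-2k` slash action
of the Fricke involution `W_N`. -/
theorem sum_a_neg_c_pos_eq_slash_id_sub_fricke
    (N D k : ℕ) (hN : 0 < N) (hD : 0 < D) (hDns : ¬ IsSquare D)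
    (hk : 0 < k) (hke : Even k) (x : ℚ) (hx : x ≠ 0) :
    (∑' p : {p : ℤ × ℤ × ℤ //
        p.2.1 ^ 2 - 4 * p.1 * p.2.2 = (D : ℤ) ∧ (N : ℤ) ∣ p.1 ∧ p.1 < 0 ∧ 0 < p.2.2},
      ((p.1.1 : ℝ) * (x : ℝ) ^ 2 + (p.1.2.1 : ℝ) * (x : ℝ) + (p.1.2.2 : ℝ)) ^ (k - 1)) =
    (∑' p : {p : ℤ × ℤ × ℤ //
        p.2.1 ^ 2 - 4 * p.1 * p.2.2 = (D : ℤ) ∧ (N : ℤ) ∣ p.1 ∧ p.1 < 0 ∧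
        0 < (p.1 : ℝ) * (x : ℝ) ^ 2 + (p.2.1 : ℝ) * (x : ℝ) + (p.2.2 : ℝ)},
      ((p.1.1 : ℝ) * (x : ℝ) ^ 2 + (p.1.2.1 : ℝ) * (x : ℝ) + (p.1.2.2 : ℝ)) ^ (k - 1))
    - (N : ℝ) ^ (k - 1) * (x : ℝ) ^ (2 * k - 2) *
      ∑' p : {p : ℤ × ℤ × ℤ //
        p.2.1 ^ 2 - 4 * p.1 * p.2.2 = (D : ℤ) ∧ (N : ℤ) ∣ p.1 ∧ p.1 < 0 ∧
        0 < (p.1 : ℝ) / ((N : ℝ) ^ 2 * (x : ℝ) ^ 2) - (p.2.1 : ℝ) / ((N : ℝ) * (x : ℝ)) + (p.2.2 : ℝ)},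
      ((p.1.1 : ℝ) / ((N : ℝ) ^ 2 * (x : ℝ) ^ 2) - (p.1.2.1 : ℝ) / ((N : ℝ) * (x : ℝ))
        + (p.1.2.2 : ℝ)) ^ (k - 1) := by
  have hxR : (x : ℝ) ≠ 0 := by exact_mod_cast hx
  have hj : Odd (k - 1) := Nat.Even.sub_odd hk hke odd_one
  have f₁ : {p : ℤ × ℤ × ℤ | IsForm N D p ∧ p.1 < 0 ∧ 0 < p.2.2}.Finite :=
    (finite_forms D 0).subset fun p hp => ⟨hp.1.1, hp.2.1, by simpa [formVal] using hp.2.2⟩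
  have f₂ : {p : ℤ × ℤ × ℤ | IsForm N D p ∧ p.1 < 0 ∧ 0 < formVal x p}.Finite :=
    (finite_forms D x).subset fun p hp => ⟨hp.1.1, hp.2⟩
  have f₃ : {p : ℤ × ℤ × ℤ | IsForm N D p ∧ p.1 < 0 ∧ 0 < formVal (-1 / (N * (x : ℝ))) p}.Finite :=
    (finite_forms D (-1 / (N * x))).subset fun p hp =>
      ⟨hp.1.1, hp.2.1, by have := hp.2.2; push_cast; exact this⟩
  have f₄ : {p : ℤ × ℤ × ℤ | IsForm N D p ∧ 0 < p.2.2 ∧ formVal x p < 0}.Finite := by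
    have := f₃.to_subtype
    have := Finite.of_equiv _ (formsEquiv N D hN x hxR)
    exact Set.toFinite _
  have main := tsum_split N D (k - 1) hDns hj x f₁ f₂ f₄
  have hfr : (N : ℝ) ^ (k - 1) * (x : ℝ) ^ (2 * k - 2) *
      ∑' p : {p : ℤ × ℤ × ℤ | IsForm N D p ∧ p.1 < 0 ∧ 0 < formVal (-1 / (N * (x : ℝ))) p},
        formVal (-1 / (N * (x : ℝ))) p ^ (k - 1) =
      -∑' p : {p : ℤ × ℤ × ℤ | IsForm N D p ∧ 0 < p.2.2 ∧ formVal x p < 0},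
        formVal x p ^ (k - 1) := by
    rw [← (formsEquiv N D hN x hxR).tsum_eq, ← tsum_mul_left, ← tsum_neg]
    refine tsum_congr fun p => ?_
    rw [show 2 * k - 2 = 2 * (k - 1) by omega, pow_mul, ← mul_pow, ← mul_pow,
      fricke_value hN hxR p.2.1, hj.neg_pow]
    rfl
  have hval : ∀ p : ℤ × ℤ × ℤ, (p.1 : ℝ) / ((N : ℝ) ^ 2 * (x : ℝ) ^ 2)
      - (p.2.1 : ℝ) / ((N : ℝ) * (x : ℝ)) + (p.2.2 : ℝ) = formVal (-1 / (N * (x : ℝ))) p := by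
    intro p
    have hNR : (N : ℝ) ≠ 0 := by exact_mod_cast hN.ne'
    simp only [formVal]
    field_simp
    ring
  -- The index types of the statement have the same elements as the sets above.
  have e : ∀ (P : ℤ × ℤ × ℤ → Prop) (S : Set (ℤ × ℤ × ℤ)) (g h : ℤ × ℤ × ℤ → ℝ),
      (∀ p, P p ↔ p ∈ S) → (∀ p, g p = h p) → ∑' p : {p // P p}, g p = ∑' p : S, h p := by
    intro P S g h hPS hgh
    rw [← (Equiv.subtypeEquivRight hPS).tsum_eq]
    exact tsum_congr fun p => hgh p
  refine (e _ _ (fun p => formVal x p ^ (k - 1)) _ (fun p => and_assoc.symm)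
    (fun p => rfl)).trans (main.trans ?_)
  · rw [← sub_neg_eq_add, ← hfr]
    congr 1
    · exact (e _ _ (fun p => formVal x p ^ (k - 1)) _ (fun p => and_assoc.symm) (fun p => rfl)).symm
    · congr 1
      refine (e _ _ (fun p => ((p.1 : ℝ) / ((N : ℝ) ^ 2 * (x : ℝ) ^ 2)
        - (p.2.1 : ℝ) / ((N : ℝ) * (x : ℝ)) + (p.2.2 : ℝ)) ^ (k - 1))
        (fun p => formVal (-1 / (N * (x : ℝ))) p ^ (k - 1))
        (fun p => ?_) (fun p => ?_)).symm
      · rw [hval]; exact and_assoc.symm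
      · rw [hval]
end

section
/- Let N be a positive integer, D a positive integer, and k a positive even integer. Let S = {(a,b,c) ∈ ℤ³ : b² − 4ac = D, N ∣ a, a < 0 < c}, a finite set. Then for every nonzero complex number z: N^{k−1}·z^{2k−2}·∑_{(a,b,c) ∈ S} (a/(N²z²) − b/(Nz) + c)^{k−1} = − ∑_{(a,b,c) ∈ S} (az² + bz + c)^{k−1}. (Equivalently, the finite sum ∑_{S} Q(z,1)^{k−1} satisfies (∑_S Q(z,1)^{k−1})|_{2−2k}(W_N − id) = −2·∑_S Q(z,1)^{k−1}.) -/
/-!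
The proof is a reindexing of the sum. The map `[a, b, c] ↦ [-N c, b, -a / N]` is an involution of
the index set (`frickeEquiv`): it keeps the discriminant, and the conditions `a < 0` and `0 < c`
are exchanged. With `Q'` the image of `Q`, one has `N z² Q(-1/(Nz), 1) = -Q'(z, 1)`
(`fricke_term`), and the exponent `k - 1` is odd, so the sign comes out of every term.
Reindexing and pulling out constants are valid for `tsum` in `ℂ` without a summability
hypothesis, so the finiteness of the index set is not needed.
-/

open Complex

/-- The forms `[a, b, c]` of discriminant `D` with `N ∣ a` and `a < 0 < c`, encoded as triples. -/
abbrev FrickeIndex (N D : ℕ) : Type :=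
  {p : ℤ × ℤ × ℤ //
    p.2.1 ^ 2 - 4 * p.1 * p.2.2 = (D : ℤ) ∧ (N : ℤ) ∣ p.1 ∧ p.1 < 0 ∧ 0 < p.2.2}

/-- The map `[a, b, c] ↦ [-N c, b, -a / N]` on `FrickeIndex N D`; the integer division is exact
because `N ∣ a`. -/
def frickeMap (N D : ℕ) (hN : 0 < N) (p : FrickeIndex N D) : FrickeIndex N D :=
  ⟨(-(N * p.1.2.2), p.1.2.1, -(p.1.1 / N)), by
    obtain ⟨⟨a, b, c⟩, hdisc, ⟨m, hm⟩, ha, hc⟩ := p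
    have hN' : (0 : ℤ) < N := by exact_mod_cast hN
    dsimp only at hdisc hm ha hc ⊢
    subst hm
    rw [Int.mul_ediv_cancel_left _ hN'.ne']
    refine ⟨by linear_combination hdisc, ⟨-c, by ring⟩, by nlinarith, by nlinarith⟩⟩

theorem frickeMap_involutive (N D : ℕ) (hN : 0 < N) :
    Function.Involutive (frickeMap N D hN) := by
  rintro ⟨⟨a, b, c⟩, hdisc, ⟨m, hm⟩, ha, hc⟩
  have hN' : (N : ℤ) ≠ 0 := by exact_mod_cast hN.ne'
  dsimp only at hm
  subst hm
  apply Subtype.ext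
  simp only [frickeMap, Int.mul_ediv_cancel_left _ hN', ← mul_neg, neg_neg]

/-- `frickeMap` as a permutation of the index set. -/
def frickeEquiv (N D : ℕ) (hN : 0 < N) : FrickeIndex N D ≃ FrickeIndex N D :=
  (frickeMap_involutive N D hN).toPerm

/-- `N z² Q(-1/(Nz), 1) = -Q'(z, 1)`, where `Q'` is the image of `Q` under `frickeEquiv`. -/
theorem fricke_term (N D : ℕ) (hN : 0 < N) (z : ℂ) (hz : z ≠ 0) (p : FrickeIndex N D) :
    (N : ℂ) * z ^ 2 * ((p.1.1 : ℂ) / ((N : ℂ) ^ 2 * z ^ 2) - (p.1.2.1 : ℂ) / ((N : ℂ) * z)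
      + (p.1.2.2 : ℂ)) =
    -(((frickeEquiv N D hN p).1.1 : ℂ) * z ^ 2 + ((frickeEquiv N D hN p).1.2.1 : ℂ) * z
      + ((frickeEquiv N D hN p).1.2.2 : ℂ)) := by
  obtain ⟨⟨a, b, c⟩, hdisc, ⟨m, hm⟩, ha, hc⟩ := p
  have hN' : (N : ℤ) ≠ 0 := by exact_mod_cast hN.ne'
  have hNC : (N : ℂ) ≠ 0 := by exact_mod_cast hN.ne'
  dsimp only at hm
  subst hm
  simp only [frickeEquiv, Function.Involutive.coe_toPerm, frickeMap,
    Int.mul_ediv_cancel_left _ hN']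
  push_cast
  field_simp
  ring

/-- For the finite set `S` of forms `[a,b,c]` of discriminant `D` with `N ∣ a` and
`a < 0 < c`, the sum `∑_S Q(z,1)^(k-1)` is negated by the weight `2-2k` slash action
of the Fricke involution `W_N`:
`N^(k-1) z^(2k-2) ∑_S Q(-1/(Nz),1)^(k-1) = - ∑_S Q(z,1)^(k-1)`. -/
theorem fricke_negates_sum_a_neg_c_pos
    (N D k : ℕ) (hN : 0 < N) (hD : 0 < D) (hk : 0 < k) (hke : Even k)
    (z : ℂ) (hz : z ≠ 0) :
    (N : ℂ) ^ (k - 1) * z ^ (2 * k - 2) *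
      (∑' p : {p : ℤ × ℤ × ℤ //
          p.2.1 ^ 2 - 4 * p.1 * p.2.2 = (D : ℤ) ∧ (N : ℤ) ∣ p.1 ∧ p.1 < 0 ∧ 0 < p.2.2},
        ((p.1.1 : ℂ) / ((N : ℂ) ^ 2 * z ^ 2) - (p.1.2.1 : ℂ) / ((N : ℂ) * z)
          + (p.1.2.2 : ℂ)) ^ (k - 1)) =
    - ∑' p : {p : ℤ × ℤ × ℤ //
        p.2.1 ^ 2 - 4 * p.1 * p.2.2 = (D : ℤ) ∧ (N : ℤ) ∣ p.1 ∧ p.1 < 0 ∧ 0 < p.2.2},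
      ((p.1.1 : ℂ) * z ^ 2 + (p.1.2.1 : ℂ) * z + (p.1.2.2 : ℂ)) ^ (k - 1) := by
  have hodd : Odd (k - 1) := Nat.Even.sub_odd hk hke odd_one
  rw [← (frickeEquiv N D hN).tsum_eq (fun p : FrickeIndex N D =>
      ((p.1.1 : ℂ) * z ^ 2 + (p.1.2.1 : ℂ) * z + (p.1.2.2 : ℂ)) ^ (k - 1)), ← tsum_neg,
    ← tsum_mul_left]
  refine tsum_congr fun p => ?_
  rw [← hodd.neg_pow, ← fricke_term N D hN z hz p, mul_pow, mul_pow, ← pow_mul,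
    show 2 * (k - 1) = 2 * k - 2 by omega]
end

section
/- Let a, b, c be real numbers with a < 0 and D := b² − 4ac > 0, and let k ≥ 2 be an integer. Then ∫_{−∞}^{∞} (max(0, a·x² + b·x + c))^{k−1} dx = (√π · Γ(k)/Γ(k + 1/2)) · 2^{1−2k} · D^{k−1/2} · |a|^{−k}. -/
/-!
Completing the square gives `a x² + b x + c = D / (4|a|) · (1 - t²)` with `t = (2 a x + b) / √D`,
so an affine substitution reduces the claim to the integral `∫_{-1}^{1} (1 - t²)ⁿ dt` with
`n = k - 1` (`integral_one_sub_sq_pow`). That integral equals `√π Γ(n + 1) / Γ(n + 3/2)` by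
induction on `n`: integrating the derivative of `t (1 - t²)ⁿ⁺¹` over `[-1, 1]` yields the same
recurrence that `Γ(s + 1) = s Γ(s)` gives for the right-hand side.
-/

open MeasureTheory Real

lemma integral_one_sub_sq_pow_succ (n : ℕ) :
    (2 * (n : ℝ) + 3) * ∫ t in (-1 : ℝ)..1, (1 - t ^ 2) ^ (n + 1) =
      (2 * (n : ℝ) + 2) * ∫ t in (-1 : ℝ)..1, (1 - t ^ 2) ^ n := by
  have hderiv : ∀ t ∈ Set.uIcc (-1 : ℝ) 1, HasDerivAt (fun t : ℝ => t * (1 - t ^ 2) ^ (n + 1))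
      ((2 * n + 3) * (1 - t ^ 2) ^ (n + 1) - (2 * n + 2) * (1 - t ^ 2) ^ n) t := by
    intro t _
    have h := (hasDerivAt_id t).mul ((((hasDerivAt_id t).pow 2).const_sub 1).pow (n + 1))
    convert! h using 1
    simp
    ring
  have hint := intervalIntegral.integral_eq_sub_of_hasDerivAt hderiv
    (Continuous.intervalIntegrable (by fun_prop) _ _)
  rw [intervalIntegral.integral_sub (Continuous.intervalIntegrable (by fun_prop) _ _)
    (Continuous.intervalIntegrable (by fun_prop) _ _),
    intervalIntegral.integral_const_mul, intervalIntegral.integral_const_mul] at hint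
  norm_num at hint
  linarith

lemma integral_one_sub_sq_pow (n : ℕ) :
    ∫ t in (-1 : ℝ)..1, (1 - t ^ 2) ^ n = √π * Gamma (n + 1) / Gamma (n + 3 / 2) := by
  induction n with
  | zero =>
    have h : Gamma (3 / 2) = 1 / 2 * √π := by
      rw [← Gamma_one_half_eq, ← Gamma_add_one (by norm_num)]
      norm_num
    have hpi : √π ≠ 0 := by positivity
    norm_num [h]
    field_simp
  | succ n ih =>
    have hrec := integral_one_sub_sq_pow_succ n
    have h1 : Gamma ((n : ℝ) + 1 + 1) = (n + 1) * Gamma (n + 1) := Gamma_add_one (by positivity)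
    have h2 : Gamma ((n : ℝ) + 1 + 3 / 2) = (n + 3 / 2) * Gamma (n + 3 / 2) := by
      rw [← Gamma_add_one (by positivity)]
      ring_nf
    have h3 : Gamma ((n : ℝ) + 3 / 2) ≠ 0 := (Gamma_pos_of_pos (by positivity)).ne'
    rw [ih] at hrec
    push_cast
    rw [h1, h2]
    have h4 : (n : ℝ) + 3 / 2 ≠ 0 := by positivity
    field_simp at hrec ⊢
    linarith

/-- The exponent is nonzero because `0 ^ 0 = 1` would make the integrand nonzero off `[-1, 1]`. -/
lemma integral_max_one_sub_sq_pow {n : ℕ} (hn : n ≠ 0) :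
    ∫ t : ℝ, (max 0 (1 - t ^ 2)) ^ n = ∫ t in (-1 : ℝ)..1, (1 - t ^ 2) ^ n := by
  rw [intervalIntegral.integral_of_le (by norm_num), ← integral_indicator measurableSet_Ioc]
  congr 1
  ext t
  by_cases ht : t ∈ Set.Ioc (-1 : ℝ) 1
  · rw [Set.indicator_of_mem ht, max_eq_right]
    nlinarith [ht.1, ht.2]
  · rw [Set.indicator_of_notMem ht, max_eq_left, zero_pow hn]
    by_contra! h
    exact ht ⟨by nlinarith, by nlinarith⟩

/-- For real `a < 0`, `D = b² - 4ac > 0`, and an integer `k ≥ 2`,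
`∫_ℝ (max 0 (ax²+bx+c))^{k-1} dx = (√π Γ(k)/Γ(k+1/2)) · 2^{1-2k} · D^{k-1/2} · |a|^{-k}`. -/
theorem integral_max_quadratic_pow
    (a b c : ℝ) (ha : a < 0) (hD : 0 < b ^ 2 - 4 * a * c) (k : ℕ) (hk : 2 ≤ k) :
    ∫ x : ℝ, (max 0 (a * x ^ 2 + b * x + c)) ^ (k - 1) =
      Real.sqrt Real.pi * Real.Gamma (k : ℝ) / Real.Gamma ((k : ℝ) + 1 / 2) *
        (2 : ℝ) ^ ((1 : ℤ) - 2 * (k : ℤ)) *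
        (b ^ 2 - 4 * a * c) ^ ((k : ℝ) - 1 / 2) *
        |a| ^ (-(k : ℤ)) := by
  obtain ⟨n, rfl⟩ : ∃ n, k = n + 1 := ⟨k - 1, by omega⟩
  have hn : n ≠ 0 := by omega
  set D := b ^ 2 - 4 * a * c with hDdef
  have hs : 0 < √D := sqrt_pos.2 hD
  have hsq : √D ^ 2 = D := sq_sqrt hD.le
  have ha' : 0 < |a| := abs_pos.2 ha.ne
  have hpt : ∀ x : ℝ, (max 0 (a * x ^ 2 + b * x + c)) ^ n =
      (D / (4 * |a|)) ^ n * (max 0 (1 - (2 * a / √D * x + b / √D) ^ 2)) ^ n := by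
    intro x
    rw [← mul_pow, mul_max_of_nonneg _ _ (by positivity), mul_zero]
    congr 2
    have : (2 * a / √D * x + b / √D) ^ 2 = (2 * a * x + b) ^ 2 / D := by
      rw [div_mul_eq_mul_div, ← add_div, div_pow, hsq]
    rw [this, abs_of_neg ha]
    have ha0 := ha.ne
    field_simp
    rw [hDdef]
    ring
  have hsubst : ∫ x : ℝ, (max 0 (1 - (2 * a / √D * x + b / √D) ^ 2)) ^ n =
      √D / (2 * |a|) * ∫ t : ℝ, (max 0 (1 - t ^ 2)) ^ n := by
    rw [Measure.integral_comp_mul_left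
      (fun y : ℝ => (max 0 (1 - (y + b / √D) ^ 2)) ^ n) (2 * a / √D),
      integral_add_right_eq_self (fun y : ℝ => (max 0 (1 - y ^ 2)) ^ n), smul_eq_mul]
    congr 1
    rw [inv_div, abs_div, abs_mul, abs_of_pos hs, abs_two]
  have hpowD : D ^ (((n + 1 : ℕ) : ℝ) - 1 / 2) = D ^ n * √D := by
    rw [sqrt_eq_rpow, ← rpow_natCast, ← rpow_add hD]
    push_cast
    ring_nf
  have hpow2 : (2 : ℝ) ^ ((1 : ℤ) - 2 * ((n + 1 : ℕ) : ℤ)) = ((4 : ℝ) ^ n * 2)⁻¹ := by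
    have : (1 : ℤ) - 2 * ((n + 1 : ℕ) : ℤ) = -((2 * n + 1 : ℕ) : ℤ) := by
      push_cast
      ring
    rw [this, zpow_neg, zpow_natCast, pow_succ, pow_mul]
    norm_num
  have hGamma : ((n + 1 : ℕ) : ℝ) + 1 / 2 = n + 3 / 2 := by
    push_cast
    ring
  simp only [Nat.add_sub_cancel, hpt]
  rw [integral_const_mul, hsubst, integral_max_one_sub_sq_pow hn, integral_one_sub_sq_pow,
    hpowD, hpow2, hGamma, zpow_neg, zpow_natCast, div_pow, mul_pow, pow_succ, Nat.cast_succ]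
  have h3 : Gamma ((n : ℝ) + 3 / 2) ≠ 0 := (Gamma_pos_of_pos (by positivity)).ne'
  field_simp
end

section
/- Let N be a positive integer and let D be a positive integer that is not a perfect square. Then for every rational number x, the set {(a,b,c) ∈ ℤ³ : b² − 4ac = D, N ∣ a, a < 0, and a·x² + b·x + c > 0} is finite. -/
/-!
Write `x = p / q` in lowest terms, and put `s = 2ap + bq` and `m = ap² + bpq + cq² = q² Q(x,1)`.
The identity `D q² = s² + 4 (-a) m` has both summands nonnegative, and `m` is a positive integer,
so `-a` and `|s|` are at most `D q²`. Since `a ≠ 0` and `q ≠ 0`, the pair `(a, s)` determines `b`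
and then `c` (from the discriminant), so only finitely many forms occur.
-/

/-- For `D > 0` not a perfect square and any rational `x`, the set of forms
`[a,b,c]` with `b² - 4ac = D`, `N ∣ a`, `a < 0` and `Q(x,1) > 0` is finite. -/
theorem finiteness_of_local_polynomial_index_set_at_rational
    (N D : ℕ) (hN : 0 < N) (hD : 0 < D) (hDns : ¬ IsSquare D) (x : ℚ) :
    {p : ℤ × ℤ × ℤ |
        p.2.1 ^ 2 - 4 * p.1 * p.2.2 = (D : ℤ) ∧ (N : ℤ) ∣ p.1 ∧ p.1 < 0 ∧
        0 < (p.1 : ℚ) * x ^ 2 + (p.2.1 : ℚ) * x + (p.2.2 : ℚ)}.Finite := by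
  obtain ⟨q, hq⟩ : ∃ q : ℤ, q = x.den := ⟨_, rfl⟩
  have hq0 : 0 < q := by rw [hq]; exact_mod_cast x.den_pos
  have hx : x * q = x.num := by rw [hq]; exact_mod_cast Rat.mul_den_eq_num x
  generalize x.num = p at hx
  refine Set.Finite.of_injOn (f := fun t : ℤ × ℤ × ℤ => (t.1, 2 * t.1 * p + t.2.1 * q))
    (t := Set.Icc (-(D * q ^ 2)) 0 ×ˢ Set.Icc (-(D * q ^ 2)) (D * q ^ 2)) ?_ ?_
    ((Set.finite_Icc _ _).prod (Set.finite_Icc _ _))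
  · rintro ⟨a, b, c⟩ ⟨hdisc, -, ha, hpos⟩
    dsimp only at hdisc ha hpos
    have hm : 0 < a * p ^ 2 + b * p * q + c * q ^ 2 := by
      have hqQ : (0 : ℚ) < (q : ℚ) ^ 2 := by positivity
      have h := mul_pos hpos hqQ
      have e : ((a : ℚ) * x ^ 2 + b * x + c) * (q : ℚ) ^ 2
          = a * (x * q) ^ 2 + b * (x * q) * q + c * (q : ℚ) ^ 2 := by ring
      rw [e, hx] at h
      exact_mod_cast h
    have key : (D : ℤ) * q ^ 2
        = (2 * a * p + b * q) ^ 2 + 4 * (-a) * (a * p ^ 2 + b * p * q + c * q ^ 2) := by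
      rw [← hdisc]; ring
    generalize a * p ^ 2 + b * p * q + c * q ^ 2 = m at hm key
    generalize hs : 2 * a * p + b * q = s at key
    have ham : -a ≤ -a * m := by nlinarith
    simp only [Set.mem_prod, Set.mem_Icc, hs]
    have hs2 : s ≤ s ^ 2 := Int.le_self_sq s
    have hs3 : -s ≤ s ^ 2 := by simpa using Int.le_self_sq (-s)
    refine ⟨⟨?_, ha.le⟩, ?_, ?_⟩ <;> nlinarith [sq_nonneg s]
  · rintro ⟨a, b, c⟩ ⟨hdisc, -, ha, -⟩ ⟨a', b', c'⟩ ⟨hdisc', -, -, -⟩ h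
    dsimp only at hdisc hdisc' ha h
    obtain ⟨rfl, h2⟩ := Prod.mk.inj h
    obtain rfl : b = b' := mul_right_cancel₀ hq0.ne' (add_left_cancel h2)
    obtain rfl : c = c' := mul_left_cancel₀ ha.ne (by linarith)
    rfl
end

section
/- Let N be a positive integer, D a positive integer, k a positive integer, and t > 0 a real number. Then the unconditional sum ∑'_{(a,b,c) ∈ Q_{N,D}} (a·(it)² + b·(it) + c)^{−k} = ∑'_{(a,b,c) ∈ Q_{N,D}} (−a·t² + i·b·t + c)^{−k} is a real number, i.e. it equals its own complex conjugate. -/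
open Complex

/-- The involution `[a, b, c] ↦ [a, -b, c]` of `Q_{N,D}`. It replaces `Q(it, 1)` by its complex
conjugate, so it carries the sum over `Q_{N,D}` to the conjugate sum. -/
def negMiddle (N D : ℕ) :
    {p : ℤ × ℤ × ℤ // p.2.1 ^ 2 - 4 * p.1 * p.2.2 = (D : ℤ) ∧ (N : ℤ) ∣ p.1} ≃
      {p : ℤ × ℤ × ℤ // p.2.1 ^ 2 - 4 * p.1 * p.2.2 = (D : ℤ) ∧ (N : ℤ) ∣ p.1} where
  toFun p := ⟨(p.1.1, -p.1.2.1, p.1.2.2), by simpa using p.2⟩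
  invFun p := ⟨(p.1.1, -p.1.2.1, p.1.2.2), by simpa using p.2⟩
  left_inv p := by simp
  right_inv p := by simp

/-- The function `f_{k,N,D,1}` is real-valued on the positive imaginary axis: for
`t > 0`, the sum `∑'_{Q ∈ Q_{N,D}} Q(it,1)^{-k}` equals its own complex conjugate. -/
theorem sum_on_imaginary_axis_is_real
    (N D k : ℕ) (hN : 0 < N) (hD : 0 < D) (hk : 0 < k) (t : ℝ) (ht : 0 < t) :
    (starRingEnd ℂ)
        (∑' p : {p : ℤ × ℤ × ℤ //
            p.2.1 ^ 2 - 4 * p.1 * p.2.2 = (D : ℤ) ∧ (N : ℤ) ∣ p.1},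
          ((p.1.1 : ℂ) * ((t : ℂ) * Complex.I) ^ 2 + (p.1.2.1 : ℂ) * ((t : ℂ) * Complex.I)
            + (p.1.2.2 : ℂ)) ^ (-(k : ℤ))) =
      ∑' p : {p : ℤ × ℤ × ℤ //
          p.2.1 ^ 2 - 4 * p.1 * p.2.2 = (D : ℤ) ∧ (N : ℤ) ∣ p.1},
        ((p.1.1 : ℂ) * ((t : ℂ) * Complex.I) ^ 2 + (p.1.2.1 : ℂ) * ((t : ℂ) * Complex.I)
          + (p.1.2.2 : ℂ)) ^ (-(k : ℤ)) := by
  -- `Complex.conj_tsum` and reindexing by an `Equiv` hold for `tsum` without summability.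
  rw [Complex.conj_tsum, ← (negMiddle N D).tsum_eq]
  refine tsum_congr fun p => ?_
  simp [negMiddle, mul_pow]
end
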